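/- arXiv:1812.06886 — 4 statements merged into one kernel-verified Lean document; each statement's English description precedes it below -/
import Mathlib

section
/- There exist 6 mutually orthogonal Latin squares of order 35; that is, N(35) ≥ 6. -/
/-- A Latin square of order `n`: every row map and every column map is a bijection. -/
def IsLatinSquare {n : ℕ} (L : Fin n → Fin n → Fin n) : Prop :=
  (∀ i, Function.Bijective fun j => L i j) ∧ (∀ j, Function.Bijective fun i => L i j)

/-- Two squares are orthogonal if the superposition map is injective. -/
def IsOrthogonal {n : ℕ} (L₁ L₂ : Fin n → Fin n → Fin n) : Prop :=
  Function.Injective fun p : Fin n × Fin n => (L₁ p.1 p.2, L₂ p.1 p.2)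

/-!
A difference matrix over a group of order 35 with 7 rows yields 6 MOLS of order 35, one for each
row other than a chosen one. Such a matrix is obtained from 5 blocks of length 7 over `ℤ/35` by
taking all cyclic shifts of the blocks as columns, provided that for each `t ≠ 0` in `ℤ/7` the 35
differences of entries `t` places apart exhaust `ℤ/35`. The blocks used here are permuted when
values are multiplied by 4 and positions by 3; as 3 generates `(ℤ/7)ˣ`, only `t = 1` has to be
checked.
-/

open Function

section DifferenceMatrix

variable {κ J G : Type*} [AddGroup G]

/-- A difference matrix of index 1 over `G`, with rows indexed by `κ` and columns by `J`: the
difference of two distinct rows takes every value in `G` exactly once. -/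
def IsDifferenceMatrix (D : κ → J → G) : Prop :=
  ∀ ⦃r r'⦄, r ≠ r' → Bijective fun c => D r c - D r' c

/-- The square attached to row `r` of a matrix `D` over `G`: the translates by the elements of `G`
of row `r`, normalized so that row `r₀` becomes zero. The labellings `eG` and `eJ` identify the
elements of `G` and the columns of `D` with `Fin n`. -/
def differenceSquare {n : ℕ} (D : κ → J → G) (eG : G ≃ Fin n) (eJ : J ≃ Fin n) (r₀ r : κ) :
    Fin n → Fin n → Fin n :=
  fun i j => eG (D r (eJ.symm j) - D r₀ (eJ.symm j) + eG.symm i)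

namespace IsDifferenceMatrix

variable {n : ℕ} {D : κ → J → G} {r₀ r r' : κ}

theorem isLatinSquare_differenceSquare (hD : IsDifferenceMatrix D) (eG : G ≃ Fin n)
    (eJ : J ≃ Fin n) (hr : r ≠ r₀) : IsLatinSquare (differenceSquare D eG eJ r₀ r) := by
  refine ⟨fun i => ?_, fun j => ?_⟩
  · exact (eG.bijective.comp (Equiv.addRight (eG.symm i)).bijective).comp
      ((hD hr).comp eJ.symm.bijective)
  · exact (eG.bijective.comp (Equiv.addLeft _).bijective).comp eG.symm.bijective

theorem isOrthogonal_differenceSquare (hD : IsDifferenceMatrix D) (eG : G ≃ Fin n)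
    (eJ : J ≃ Fin n) (hr : r ≠ r') :
    IsOrthogonal (differenceSquare D eG eJ r₀ r) (differenceSquare D eG eJ r₀ r') := by
  rintro ⟨i, j⟩ ⟨i', j'⟩ h
  simp only [differenceSquare, Prod.mk.injEq, EmbeddingLike.apply_eq_iff_eq] at h
  obtain ⟨h_r, h_r'⟩ := h
  have h_col : j = j' := by
    apply eJ.symm.injective
    apply (hD hr).injective
    simpa only [add_sub_add_right_eq_sub, sub_sub_sub_cancel_right] using
      congrArg₂ (· - ·) h_r h_r'
  subst h_col
  rw [eG.symm.injective (add_left_cancel h_r)]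

end IsDifferenceMatrix

end DifferenceMatrix

section DifferenceFamily

variable {ι C G : Type*} [AddGroup C] [AddGroup G]

/-- The differences at distance `t` in a family `B` of blocks whose positions are indexed by the
group `C`; a pair consists of a block and a position in it. -/
def blockDifference (B : ι → C → G) (t : C) (p : ι × C) : G :=
  B p.1 (p.2 + t) - B p.1 p.2

/-- A perfect difference family: at every nonzero distance, the differences in the blocks take
every value in `G`, zero included, exactly once. -/
def IsPerfectDifferenceFamily (B : ι → C → G) : Prop :=
  ∀ ⦃t⦄, t ≠ 0 → Bijective (blockDifference B t)

/-- The matrix whose columns are all shifts of the blocks of `B`. -/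
def shiftMatrix (B : ι → C → G) (r : C) (c : ι × C) : G :=
  B c.1 (c.2 + r)

theorem IsPerfectDifferenceFamily.isDifferenceMatrix_shiftMatrix {B : ι → C → G}
    (hB : IsPerfectDifferenceFamily B) : IsDifferenceMatrix (shiftMatrix B) := by
  intro r r' hr
  have h_distance : -r' + r ≠ 0 := by rwa [Ne, neg_add_eq_zero, eq_comm]
  have h_shift : (fun c => shiftMatrix B r c - shiftMatrix B r' c) =
      blockDifference B (-r' + r) ∘ Prod.map id (· + r') := by
    funext c
    simp only [shiftMatrix, blockDifference, comp_apply, Prod.map_fst, Prod.map_snd, id_eq,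
      add_assoc, add_neg_cancel_left]
  rw [h_shift]
  exact (hB h_distance).comp (bijective_id.prodMap (Equiv.addRight r').bijective)

/-- A multiplier of a family of blocks: applying `u` to the values and `a` to the positions
permutes the blocks according to `σ`. -/
def IsMultiplier (B : ι → C → G) (σ : Equiv.Perm ι) (a : AddAut C) (u : AddAut G) : Prop :=
  ∀ b i, B (σ b) (a i) = u (B b i)

namespace IsMultiplier

variable {B : ι → C → G} {σ : Equiv.Perm ι} {a : AddAut C} {u : AddAut G} {t t₀ : C}

theorem blockDifference_map (h : IsMultiplier B σ a u) (p : ι × C) :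
    blockDifference B (a t) (Prod.map σ a p) = u (blockDifference B t p) := by
  simp only [blockDifference, Prod.map_fst, Prod.map_snd, ← map_add, h _ _, map_sub]

theorem bijective_blockDifference_map (h : IsMultiplier B σ a u)
    (ht : Bijective (blockDifference B t)) : Bijective (blockDifference B (a t)) := by
  have h_comp : blockDifference B (a t) ∘ Prod.map σ a = u ∘ blockDifference B t :=
    funext h.blockDifference_map
  rw [← (σ.bijective.prodMap a.bijective).of_comp_iff, h_comp]
  exact u.bijective.comp ht

theorem isPerfectDifferenceFamily (h : IsMultiplier B σ a u)
    (ht₀ : Bijective (blockDifference B t₀)) (h_orbit : ∀ t ≠ 0, ∃ k : ℕ, a^[k] t₀ = t) :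
    IsPerfectDifferenceFamily B := by
  intro t ht
  obtain ⟨k, rfl⟩ := h_orbit t ht
  clear ht
  induction k with
  | zero => exact ht₀
  | succ k ih =>
    rw [iterate_succ_apply']
    exact h.bijective_blockDifference_map ih

end IsMultiplier

end DifferenceFamily

/-- A perfect difference family of five blocks of length 7 over `ℤ/35`. Its first three blocks are
permuted cyclically by the multiplier that multiplies positions by 3 and values by 4. The last two
are fixed by it: they vanish at `0`, and their values at `3 ^ k` are `8 * 4 ^ k` and
`16 * 4 ^ k`. -/
def blocks35 : Fin 5 → ZMod 7 → ZMod 35 :=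
  ![![0, 2, 34, 5, 5, 6, 23],
    ![0, 24, 20, 8, 22, 20, 31],
    ![0, 10, 32, 26, 19, 18, 10],
    ![0, 8, 23, 32, 18, 2, 22],
    ![0, 16, 11, 29, 1, 4, 9]]

theorem isMultiplier_blocks35 :
    IsMultiplier blocks35 c[0, 1, 2] (AddAut.mulLeft (ZMod.unitOfCoprime 3 (by decide)))
      (AddAut.mulLeft (ZMod.unitOfCoprime 4 (by decide))) := by
  unfold IsMultiplier
  decide

theorem bijective_blockDifference_blocks35_one : Bijective (blockDifference blocks35 1) := by
  unfold Bijective Injective Surjective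
  decide +kernel

theorem isPerfectDifferenceFamily_blocks35 : IsPerfectDifferenceFamily blocks35 := by
  refine isMultiplier_blocks35.isPerfectDifferenceFamily
    bijective_blockDifference_blocks35_one fun t ht => ?_
  have three_generates : ∀ t : ZMod 7, t ≠ 0 →
      ∃ k < 6, (AddAut.mulLeft (ZMod.unitOfCoprime 3 (by decide)))^[k] (1 : ZMod 7) = t := by
    decide
  obtain ⟨k, -, hk⟩ := three_generates t ht
  exact ⟨k, hk⟩

/-- There exist 6 mutually orthogonal Latin squares of order 35, i.e. N(35) ≥ 6. -/
theorem six_MOLS_of_order_35 :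
    ∃ L : Fin 6 → (Fin 35 → Fin 35 → Fin 35),
      (∀ k, IsLatinSquare (L k)) ∧
      (∀ k k', k ≠ k' → IsOrthogonal (L k) (L k')) := by
  have hD : IsDifferenceMatrix (shiftMatrix blocks35) :=
    isPerfectDifferenceFamily_blocks35.isDifferenceMatrix_shiftMatrix
  let eG : ZMod 35 ≃ Fin 35 := Fintype.equivFinOfCardEq (ZMod.card 35)
  let eJ : Fin 5 × ZMod 7 ≃ Fin 35 := Fintype.equivFinOfCardEq (by decide)
  let row : Fin 6 ≃ {r : ZMod 7 // r ≠ 0} := (Fintype.equivFinOfCardEq (by decide)).symm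
  refine ⟨fun k => differenceSquare (shiftMatrix blocks35) eG eJ 0 (row k),
    fun k => ?_, fun k k' hk => ?_⟩
  · exact hD.isLatinSquare_differenceSquare eG eJ (row k).property
  · have h_rows : (row k : ZMod 7) ≠ row k' := Subtype.val_injective.ne (row.injective.ne hk)
    exact hD.isOrthogonal_differenceSquare eG eJ h_rows
end

section
/- There exists a (35,6)-separable permutation code of length 35 and minimum distance 34; that is, there is a subset C of the symmetric group on Fin 35 of cardinality 6·35 = 210 which is the disjoint union of 6 sets L₁,…,L₆, each of cardinality 35, such that any two distinct permutations in the same L_i are at Hamming distance 35, and any two permutations in different blocks L_i, L_j are at Hamming distance 34. -/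
/-- Hamming distance between two permutations of `Fin n`:
the number of points where they differ. -/
def permHammingDist {n : ℕ} (σ τ : Equiv.Perm (Fin n)) : ℕ :=
  (Finset.univ.filter fun x => σ x ≠ τ x).card

/-!
Let `ρ` be a permutation of a finite abelian group `G` whose orbit sums
`S n x = x + ρ x + ⋯ + ρ^[n - 1] x` are bijective for `1 ≤ n ≤ m`. Since
`S (i + k) - S i = S k ∘ ρ^[i]`, the difference of any two of `S 1, …, S m` is again bijective.
Hence `g + S i` and `h + S j` agree at exactly one point when `i ≠ j`, whatever `g` and `h` are,
while distinct translates of the same `S i` agree nowhere: the translates of `S 1, …, S m` form an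
`(|G|, m)`-separable code. For `G = ℤ/35` and `m = 6`, a suitable `ρ` is a product of five
7-cycles, each with sum zero.
-/

open Equiv Finset Function

section HammingDist

variable {α G : Type*} [Fintype α] [DecidableEq G]

theorem hammingDist_eq_card_of_forall_ne {u v : α → G} (huv : ∀ x, u x ≠ v x) :
    hammingDist u v = Fintype.card α := by
  rw [hammingDist, filter_true_of_mem fun x _ ↦ huv x, card_univ]

theorem hammingDist_eq_card_sub_one_of_existsUnique {u v : α → G} (huv : ∃! x, u x = v x) :
    hammingDist u v = Fintype.card α - 1 := by
  classical
  obtain ⟨a, ha, ha_unique⟩ := huv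
  have hfilter : ({x | u x ≠ v x} : Finset α) = univ.erase a := by
    ext x
    simpa using not_congr ⟨ha_unique x, fun hx ↦ hx ▸ ha⟩
  rw [hammingDist, hfilter, card_erase_of_mem (mem_univ a), card_univ]

end HammingDist

/-- A family `L` of blocks of permutations of `α`, indexed by `ι`, that makes up an
`(r, |ι|)`-separable permutation code of length `|α|` and minimum distance `|α| - 1`.
Disjointness of the blocks is not a field: see `IsSeparableCode.disjoint`. -/
structure IsSeparableCode {ι α : Type*} [Fintype α] [DecidableEq α] (r : ℕ)
    (L : ι → Finset (Perm α)) : Prop where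
  card_block : ∀ i, #(L i) = r
  hammingDist_of_mem : ∀ i, ∀ σ ∈ L i, ∀ τ ∈ L i, σ ≠ τ → hammingDist σ τ = Fintype.card α
  hammingDist_of_ne : ∀ i j, i ≠ j → ∀ σ ∈ L i, ∀ τ ∈ L j, hammingDist σ τ = Fintype.card α - 1

namespace IsSeparableCode

variable {ι α : Type*} [Fintype α] [DecidableEq α] [Nontrivial α] {r : ℕ} {L : ι → Finset (Perm α)}

theorem disjoint (hL : IsSeparableCode r L) (i j : ι) (hij : i ≠ j) : Disjoint (L i) (L j) := by
  refine disjoint_left.mpr fun σ hi hj ↦ ?_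
  have hdist := hL.hammingDist_of_ne i j hij σ hi σ hj
  have hcard : 1 < Fintype.card α := Fintype.one_lt_card
  rw [hammingDist_self] at hdist
  lia

theorem card_biUnion [Fintype ι] (hL : IsSeparableCode r L) :
    #(univ.biUnion L) = Fintype.card ι * r := by
  rw [Finset.card_biUnion fun i _ j _ ↦ hL.disjoint i j, sum_congr rfl fun i _ ↦ hL.card_block i,
    sum_const, card_univ, smul_eq_mul]

end IsSeparableCode

section Translates

variable {G : Type*} [AddGroup G]

theorem existsUnique_add_eq_add_of_bijective_sub {α : Type*} {u v : α → G}
    (huv : Bijective (u - v)) (g h : G) : ∃! x, g + u x = h + v x := by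
  simpa only [Pi.sub_apply, eq_neg_add_iff_add_eq, ← add_sub_assoc, sub_eq_iff_eq_add] using
    huv.existsUnique (-g + h)

theorem bijective_sub_comm {α : Type*} {u v : α → G} : Bijective (u - v) ↔ Bijective (v - u) := by
  rw [← neg_sub v u]
  exact (Equiv.neg G).comp_bijective (v - u)

variable [Fintype G] [DecidableEq G]

/-- The orbit of the permutation `θ` of `G` under left translation: the permutations
`x ↦ g + θ x`. -/
def translates (θ : Perm G) : Finset (Perm G) := univ.image fun g ↦ θ.trans (Equiv.addLeft g)

theorem mem_translates {θ σ : Perm G} : σ ∈ translates θ ↔ ∃ g, θ.trans (Equiv.addLeft g) = σ := by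
  simp [translates]

theorem card_translates (θ : Perm G) : #(translates θ) = Fintype.card G := by
  refine card_image_of_injective _ fun g h hgh ↦ add_right_cancel (b := θ 0) ?_
  exact DFunLike.congr_fun hgh 0

theorem isSeparableCode_translates {ι : Type*} {θ : ι → Perm G}
    (hθ : Pairwise fun i j ↦ Bijective (⇑(θ i) - ⇑(θ j))) :
    IsSeparableCode (Fintype.card G) fun i ↦ translates (θ i) where
  card_block i := card_translates (θ i)
  hammingDist_of_mem i σ hσ τ hτ hne := by
    obtain ⟨g, rfl⟩ := mem_translates.mp hσ
    obtain ⟨h, rfl⟩ := mem_translates.mp hτ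
    refine hammingDist_eq_card_of_forall_ne fun x hx ↦ hne ?_
    rw [add_right_cancel (show g + θ i x = h + θ i x from hx)]
  hammingDist_of_ne i j hij σ hσ τ hτ := by
    obtain ⟨g, rfl⟩ := mem_translates.mp hσ
    obtain ⟨h, rfl⟩ := mem_translates.mp hτ
    exact hammingDist_eq_card_sub_one_of_existsUnique <|
      existsUnique_add_eq_add_of_bijective_sub (hθ hij) g h

end Translates

section OrbitSums

variable {α G : Type*} [AddCommGroup G]

theorem birkhoffSum_add_sub_birkhoffSum (f : α → α) (φ : α → G) (m n : ℕ) :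
    birkhoffSum f φ (m + n) - birkhoffSum f φ m = birkhoffSum f φ n ∘ f^[m] := by
  ext x
  rw [Pi.sub_apply, birkhoffSum_add, add_sub_cancel_left, comp_apply]

theorem pairwise_bijective_birkhoffSum_sub {f : α → α} {φ : α → G} {m : ℕ} (hf : Bijective f)
    (hφ : ∀ i : Fin m, Bijective (birkhoffSum f φ (i + 1))) :
    Pairwise fun i j : Fin m ↦
      Bijective (birkhoffSum f φ (i + 1) - birkhoffSum f φ (j + 1)) := by
  intro i j hij
  wlog hji : j < i generalizing i j
  · exact bijective_sub_comm.mp (this hij.symm (hij.lt_of_le (not_lt.mp hji)))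
  obtain ⟨k, hk⟩ : ∃ k : ℕ, (i : ℕ) = j + (k + 1) := Nat.exists_eq_add_of_lt hji
  rw [hk, add_right_comm, birkhoffSum_add_sub_birkhoffSum]
  exact (hφ ⟨k, by lia⟩).comp (hf.iterate _)

end OrbitSums

/-- The permutation `ρ` of `ℤ/35`, encoded as `Fin 35` with its addition modulo 35, that generates
the code: its five 7-cycles have sum zero and its shorter orbit sums are bijective. -/
def heptadRotation : Perm (Fin 35) :=
  c[0, 13, 11, 16, 26, 31, 8] * c[1, 10, 25, 6, 27, 14, 22] * c[2, 15, 29, 34, 20, 12, 28] *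
    c[3, 17, 32, 18, 19, 7, 9] * c[4, 30, 23, 33, 5, 24, 21]

theorem bijective_birkhoffSum_heptadRotation :
    ∀ i : Fin 6, Bijective (birkhoffSum heptadRotation id (i + 1)) := by
  simp only [← Finite.injective_iff_bijective, Injective]
  decide +kernel

/-- There exists a (35,6)-separable permutation code of length 35 and minimum
distance 34: a disjoint union of 6 blocks of 35 permutations each (so 210
codewords in total), with Hamming distance 35 between distinct permutations in
the same block and Hamming distance 34 between permutations in different blocks. -/
theorem separable_PA_35_6 :
    ∃ L : Fin 6 → Finset (Equiv.Perm (Fin 35)),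
      (∀ i, (L i).card = 35) ∧
      (∀ i j, i ≠ j → Disjoint (L i) (L j)) ∧
      (Finset.univ.biUnion L).card = 210 ∧
      (∀ i, ∀ σ ∈ L i, ∀ τ ∈ L i, σ ≠ τ → permHammingDist σ τ = 35) ∧
      (∀ i j, i ≠ j → ∀ σ ∈ L i, ∀ τ ∈ L j, permHammingDist σ τ = 34) := by
  let θ (i : Fin 6) : Perm (Fin 35) := .ofBijective _ (bijective_birkhoffSum_heptadRotation i)
  have hθ : Pairwise fun i j ↦ Bijective (⇑(θ i) - ⇑(θ j)) :=
    pairwise_bijective_birkhoffSum_sub heptadRotation.bijective bijective_birkhoffSum_heptadRotation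
  have hL : IsSeparableCode 35 fun i ↦ translates (θ i) := isSeparableCode_translates hθ
  exact ⟨fun i ↦ translates (θ i), hL.card_block, hL.disjoint, hL.card_biUnion,
    hL.hammingDist_of_mem, hL.hammingDist_of_ne⟩
end

section
/- There exists a permutation code C of length 20 and minimum distance 19 of cardinality 96 inside the symmetric group on Fin 20 which is the disjoint union of two sets C₁ and C₂ such that: C₁ has cardinality 80 and is a (20,4)-separable (20,19)-PA (a disjoint union of 4 blocks of 20 permutations each, with within-block pairwise Hamming distance 20 and cross-block Hamming distance 19); C₂ has cardinality 16 and any two distinct permutations in C₂ are at Hamming distance 20; and any two distinct permutations of C are at Hamming distance at least 19. -/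
/-!
On the group `ℤ₂ × ℤ₂ × ℤ₅` consider the isometries `σ ↦ α σ⁻¹ β` and `σ ↦ t_p σ t_q⁻¹`, where
`t_p` and `t_q` are translations by `p, q ∈ 0 × ℤ₂ × ℤ₅` with equal `ℤ₅`-components, `α` doubles the
last coordinate and `β (a, b, r) = (a + 1, b + a, 3 r)`. They generate a group of order `80` in
which the double translations form a normal subgroup of order `20`. The first part of the code is
the orbit of a single `20`-cycle under the whole group, and its blocks are the orbits under the
subgroup. The second part consists of the maps `(a, b, r) ↦ (a + s, b + u a + e, r ± c)` with
`c ≠ 0` and `u` depending on `s` and `c`; the isometries permute them among themselves, and no two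
of them agree at a point because the image of a point determines first `s` and `c`, then `e`. Hence
every distance that involves the first part equals one measured from the `20`-cycle, and there are
`19 + 60 + 16` of these to compute.
-/

open Equiv Finset

section HammingDist

theorem hammingDist_comp_equiv {X Y Z : Type*} [Fintype X] [Fintype Y] [DecidableEq Z]
    (e : Y ≃ X) (f g : X → Z) : hammingDist (f ∘ e) (g ∘ e) = hammingDist f g :=
  card_equiv e fun y => by simp only [mem_filter_univ, Function.comp_apply]

theorem hammingDist_eq_card {X Y : Type*} [Fintype X] [DecidableEq Y] {f g : X → Y}
    (h : ∀ x, f x ≠ g x) : hammingDist f g = Fintype.card X := by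
  rw [hammingDist, filter_true_of_mem fun x _ => h x, card_univ]

variable {X : Type*} [Fintype X] [DecidableEq X]

theorem hammingDist_mul_left (ρ σ τ : Perm X) :
    hammingDist ⇑(ρ * σ) ⇑(ρ * τ) = hammingDist σ τ :=
  hammingDist_comp (fun _ => ρ) fun _ => ρ.injective

theorem hammingDist_mul_right (σ τ ρ : Perm X) :
    hammingDist ⇑(σ * ρ) ⇑(τ * ρ) = hammingDist σ τ :=
  hammingDist_comp_equiv ρ σ τ

theorem hammingDist_inv (σ τ : Perm X) :
    hammingDist ⇑σ⁻¹ ⇑τ⁻¹ = hammingDist σ τ := by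
  calc hammingDist ⇑σ⁻¹ ⇑τ⁻¹
      = hammingDist ⇑(τ * σ⁻¹ * σ) ⇑(τ * τ⁻¹ * σ) := by
        rw [hammingDist_mul_right, hammingDist_mul_left]
    _ = hammingDist σ τ := by
        rw [inv_mul_cancel_right, mul_inv_cancel, one_mul, hammingDist_comm]

theorem injective_of_hammingDist_pos {J : Type*} {f : J → Perm X}
    (h : ∀ j k, j ≠ k → 0 < hammingDist (f j) (f k)) : Function.Injective f := by
  intro j k hjk
  by_contra hne
  exact hammingDist_pos.mp (h j k hne) (congrArg _ hjk)

theorem disjoint_of_hammingDist_pos {A B : Finset (Perm X)}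
    (h : ∀ σ ∈ A, ∀ τ ∈ B, 0 < hammingDist σ τ) : Disjoint A B :=
  disjoint_left.mpr fun σ hA hB => (h σ hA σ hB).ne' (hammingDist_self _)

theorem permHammingDist_permCongr {n : ℕ} (e : X ≃ Fin n) (σ τ : Perm X) :
    permHammingDist (e.permCongr σ) (e.permCongr τ) = hammingDist σ τ :=
  card_equiv e.symm fun i => by
    simp only [mem_filter_univ, permCongr_apply, ne_eq, e.apply_eq_iff_eq]

end HammingDist

section BiTranslate

variable {X : Type*} [AddCommGroup X]

/-- The double translate `t_p σ t_q⁻¹` of a permutation `σ` of an abelian group, for a pair of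
group elements `(p, q)`. -/
def biTranslate (p : X × X) (σ : Perm X) : Perm X :=
  Equiv.addLeft p.1 * σ * (Equiv.addLeft p.2)⁻¹

theorem biTranslate_apply (p : X × X) (σ : Perm X) (x : X) :
    biTranslate p σ x = p.1 + σ (-p.2 + x) := rfl

theorem biTranslate_biTranslate (p q : X × X) (σ : Perm X) :
    biTranslate p (biTranslate q σ) = biTranslate (p + q) σ := by
  ext x
  simp only [biTranslate_apply, Prod.fst_add, Prod.snd_add, neg_add_rev, add_assoc]

theorem biTranslate_inv (p : X × X) (σ : Perm X) :
    (biTranslate p σ)⁻¹ = biTranslate p.swap σ⁻¹ := by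
  simp only [biTranslate, mul_inv_rev, inv_inv, mul_assoc, Prod.fst_swap, Prod.snd_swap]

theorem hammingDist_biTranslate [Fintype X] [DecidableEq X] (p : X × X) (σ τ : Perm X) :
    hammingDist (biTranslate p σ) (biTranslate p τ) = hammingDist σ τ := by
  rw [biTranslate, biTranslate, hammingDist_mul_right, hammingDist_mul_left]

theorem hammingDist_biTranslate_left [Fintype X] [DecidableEq X] (p : X × X) (σ τ : Perm X) :
    hammingDist (biTranslate p σ) τ = hammingDist σ (biTranslate (-p) τ) := by
  have hτ : biTranslate p (biTranslate (-p) τ) = τ := by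
    rw [biTranslate_biTranslate, add_neg_cancel]
    ext x
    simp [biTranslate_apply]
  rw [← hammingDist_biTranslate p σ, hτ]

end BiTranslate

section Isometries

/-- The abelian group `ℤ₂ × ℤ₂ × ℤ₅` of order `20`, standing in for the points of `Fin 20`. -/
abbrev Point : Type := ZMod 2 × ZMod 2 × ZMod 5

/-- The group of order `20` indexing the double translations that preserve each block. -/
abbrev ShiftIndex : Type := ZMod 5 × ZMod 2 × ZMod 2

/-- The pair of translations with index `(r, e, f)`: by `(0, e, r)` on the values and by
`(0, f, r)` on the arguments. -/
def shiftHom : ShiftIndex →+ Point × Point where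
  toFun g := ((0, g.2.1, g.1), (0, g.2.2, g.1))
  map_zero' := rfl
  map_add' _ _ := by simp only [Prod.fst_add, Prod.snd_add, Prod.mk_add_mk, add_zero]

/-- The double translate of a permutation by the pair of translations with index `g`. -/
def shift (g : ShiftIndex) (σ : Perm Point) : Perm Point :=
  biTranslate (shiftHom g) σ

theorem hammingDist_shift_left (g : ShiftIndex) (σ τ : Perm Point) :
    hammingDist (shift g σ) τ = hammingDist σ (shift (-g) τ) := by
  rw [shift, shift, hammingDist_biTranslate_left, map_neg]

theorem hammingDist_shift_shift (g h : ShiftIndex) (σ τ : Perm Point) :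
    hammingDist (shift g σ) (shift h τ) = hammingDist σ (shift (h - g) τ) := by
  rw [hammingDist_shift_left, shift, shift, shift, biTranslate_biTranslate, ← map_add,
    neg_add_eq_sub]

/-- Multiplication by `2` on `ℤ₅`, whose inverse is multiplication by `3`. -/
def double : Perm (ZMod 5) := ⟨(2 * ·), (3 * ·), by decide, by decide⟩

/-- The isometry `σ ↦ α σ⁻¹ β`, where `α (a, b, r) = (a, b, 2 r)` and
`β (a, b, r) = (a + 1, b + a, 3 r)`. -/
def twist (σ : Perm Point) : Perm Point :=
  prodCongr 1 (prodCongr 1 double) * σ⁻¹ *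
    prodShear (Equiv.addRight 1) fun a => prodCongr (Equiv.addRight a) double⁻¹

theorem twist_apply (σ : Perm Point) (x : Point) :
    twist σ x = (1, 1, 2) * σ⁻¹ (x.1 + 1, x.2.1 + x.1, 3 * x.2.2) :=
  Prod.ext (one_mul _).symm (Prod.ext (one_mul _).symm rfl)

/-- The permutation that `twist` induces on the indices of the double translations. -/
def twistIndex : Perm ShiftIndex := prodCongr double (prodComm _ _)

theorem hammingDist_twist (σ τ : Perm Point) :
    hammingDist (twist σ) (twist τ) = hammingDist σ τ := by
  rw [twist, twist, hammingDist_mul_right, hammingDist_mul_left, hammingDist_inv]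

theorem twist_shift (g : ShiftIndex) (σ : Perm Point) :
    twist (shift g σ) = shift (twistIndex g) (twist σ) := by
  obtain ⟨r, e, f⟩ := g
  ext x : 1
  have h6 : (6 : ZMod 5) = 1 := rfl
  have hβ : -(0, e, r) + (x.1 + 1, x.2.1 + x.1, 3 * x.2.2) =
      (x.1 + 1, -e + x.2.1 + x.1, 3 * (-(2 * r) + x.2.2)) := by
    ext
    · simp
    · simp [add_assoc]
    · simp only [Prod.snd_add, Prod.snd_neg]
      linear_combination r * h6
  have hα : (1, 1, 2) * (0, f, r) = ((0, f, 2 * r) : Point) := by simp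
  calc twist (shift (r, e, f) σ) x
      = (1, 1, 2) * ((0, f, r) +
          σ⁻¹ (-(0, e, r) + (x.1 + 1, x.2.1 + x.1, 3 * x.2.2))) := by
        rw [twist_apply, shift, biTranslate_inv]
        rfl
    _ = (0, f, 2 * r) + twist σ (-(0, e, 2 * r) + x) := by
        rw [mul_add, hα, hβ, twist_apply]
        simp
    _ = shift (twistIndex (r, e, f)) (twist σ) x := rfl

theorem hammingDist_iterate_twist (i : ℕ) (g : ShiftIndex) (σ τ : Perm Point) :
    hammingDist (twist^[i] σ) (shift ((twistIndex ^ i) g) (twist^[i] τ)) =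
      hammingDist σ (shift g τ) := by
  induction i with
  | zero => rfl
  | succ i ih =>
    rw [Function.iterate_succ_apply', Function.iterate_succ_apply', pow_succ', Perm.mul_apply,
      ← twist_shift, hammingDist_twist, ih]

end Isometries

section Blocks

/-- The `20`-cycle whose orbit under the shifts and `twist` is the first part of the code. -/
def starter : Perm Point :=
  c[(0, 0, 0), (1, 0, 1), (1, 0, 2), (0, 1, 0), (1, 1, 0),
    (0, 0, 1), (0, 1, 3), (0, 0, 3), (0, 0, 2), (1, 1, 1),
    (0, 1, 1), (1, 1, 4), (1, 1, 2), (0, 0, 4), (0, 1, 2),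
    (1, 0, 4), (1, 0, 3), (1, 1, 3), (1, 0, 0), (0, 1, 4)]

/-- The `i`-th block of the first part of the code: the shifts of `twist^[i] starter`. -/
def block (i : Fin 4) : Finset (Perm Point) :=
  univ.image fun g => shift g (twist^[i] starter)

theorem hammingDist_starter_shift :
    ∀ g ≠ 0, hammingDist starter (shift g starter) = 20 := by
  decide +kernel

theorem hammingDist_starter_shift_iterate_twist :
    ∀ k < 4, k ≠ 0 → ∀ g, hammingDist starter (shift g (twist^[k] starter)) = 19 := by
  decide +kernel

theorem hammingDist_shift_shift_iterate_twist (i : ℕ) {g h : ShiftIndex} (hgh : g ≠ h) :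
    hammingDist (shift g (twist^[i] starter)) (shift h (twist^[i] starter)) = 20 := by
  obtain ⟨k, hk⟩ := (twistIndex ^ i).surjective (h - g)
  have hk0 : k ≠ 0 := by
    rintro rfl
    rw [Perm.pow_apply_eq_self_of_apply_eq_self (by decide)] at hk
    exact hgh (sub_eq_zero.mp hk.symm).symm
  rw [hammingDist_shift_shift, ← hk, hammingDist_iterate_twist, hammingDist_starter_shift k hk0]

theorem card_block (i : Fin 4) : #(block i) = 20 := by
  rw [block, card_image_of_injective, card_univ]
  · rfl
  · refine injective_of_hammingDist_pos fun g h hgh => ?_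
    rw [hammingDist_shift_shift_iterate_twist _ hgh]
    norm_num

theorem hammingDist_of_mem_block {i : Fin 4} {σ τ : Perm Point} (hσ : σ ∈ block i)
    (hτ : τ ∈ block i) (hne : σ ≠ τ) : hammingDist σ τ = 20 := by
  obtain ⟨g, -, rfl⟩ := mem_image.mp hσ
  obtain ⟨h, -, rfl⟩ := mem_image.mp hτ
  exact hammingDist_shift_shift_iterate_twist _ fun hgh => hne (hgh ▸ rfl)

theorem hammingDist_of_mem_block_of_mem_block {i j : Fin 4} (hij : i ≠ j) {σ τ : Perm Point}
    (hσ : σ ∈ block i) (hτ : τ ∈ block j) : hammingDist σ τ = 19 := by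
  wlog hlt : i < j generalizing i j σ τ
  · rw [hammingDist_comm]
    exact this hij.symm hτ hσ (hij.lt_or_gt.resolve_left hlt)
  obtain ⟨g, -, rfl⟩ := mem_image.mp hσ
  obtain ⟨h, -, rfl⟩ := mem_image.mp hτ
  obtain ⟨l, hl⟩ := (twistIndex ^ (i : ℕ)).surjective (h - g)
  rw [hammingDist_shift_shift, ← hl, ← Nat.add_sub_cancel' (Fin.lt_def.mp hlt).le,
    Function.iterate_add_apply, hammingDist_iterate_twist]
  exact hammingDist_starter_shift_iterate_twist _ (by lia) (by lia) _

theorem disjoint_block {i j : Fin 4} (hij : i ≠ j) : Disjoint (block i) (block j) :=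
  disjoint_of_hammingDist_pos fun _ hσ _ hτ => by
    rw [hammingDist_of_mem_block_of_mem_block hij hσ hτ]
    norm_num

theorem card_biUnion_block : #(univ.biUnion block) = 80 := by
  rw [card_biUnion fun i _ j _ hij => disjoint_block hij]
  simp only [card_block, sum_const, card_univ, Fintype.card_fin, smul_eq_mul]

end Blocks

section Shears

/-- The coefficient `u` for the pair `(s, c)`. This choice keeps the shears permuted by
`twist` and at distance at least `19` from `starter`. -/
def shearCoeff (s : ZMod 2) (c : ZMod 5) : ZMod 2 :=
  if 3 ≤ (2 ^ s.val * c).val then 1 else 0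

/-- The permutation `(a, b, r) ↦ (a + s, b + u a + e, r ± c)` with `u = shearCoeff s c`, where the
sign is `+` for `a = 0` and `-` for `a = 1`. -/
def signedShear (s e : ZMod 2) (c : ZMod 5) : Perm Point :=
  prodShear (Equiv.addRight s) fun a =>
    prodCongr (Equiv.addRight (shearCoeff s c * a + e)) (Equiv.addRight (if a = 0 then c else -c))

/-- The second part of the code. -/
def shearCode : Finset (Perm Point) :=
  univ.image fun p : ZMod 2 × ZMod 2 × {c : ZMod 5 // c ≠ 0} => signedShear p.1 p.2.1 p.2.2

theorem signedShear_apply (s e : ZMod 2) (c : ZMod 5) (x : Point) :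
    signedShear s e c x =
      (x.1 + s, x.2.1 + (shearCoeff s c * x.1 + e), x.2.2 + if x.1 = 0 then c else -c) := rfl

theorem eq_of_signedShear_apply_eq {s s' e e' : ZMod 2} {c c' : ZMod 5} {x : Point}
    (h : signedShear s e c x = signedShear s' e' c' x) : s = s' ∧ e = e' ∧ c = c' := by
  simp only [signedShear_apply, Prod.mk.injEq, add_right_inj] at h
  obtain ⟨rfl, he, hc⟩ := h
  obtain rfl : c = c' := by
    split_ifs at hc
    · exact hc
    · exact neg_injective hc
  exact ⟨rfl, add_left_cancel he, rfl⟩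

theorem hammingDist_signedShear {p q : ZMod 2 × ZMod 2 × {c : ZMod 5 // c ≠ 0}} (hpq : p ≠ q) :
    hammingDist (signedShear p.1 p.2.1 p.2.2) (signedShear q.1 q.2.1 q.2.2) = 20 := by
  refine hammingDist_eq_card fun x hx => hpq ?_
  obtain ⟨hs, he, hc⟩ := eq_of_signedShear_apply_eq hx
  exact Prod.ext hs (Prod.ext he (Subtype.ext hc))

theorem card_shearCode : #shearCode = 16 := by
  rw [shearCode, card_image_of_injective, card_univ]
  · rfl
  · refine injective_of_hammingDist_pos fun p q hpq => ?_
    rw [hammingDist_signedShear hpq]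
    norm_num

theorem hammingDist_of_mem_shearCode {σ τ : Perm Point} (hσ : σ ∈ shearCode)
    (hτ : τ ∈ shearCode) (hne : σ ≠ τ) : hammingDist σ τ = 20 := by
  obtain ⟨p, -, rfl⟩ := mem_image.mp hσ
  obtain ⟨q, -, rfl⟩ := mem_image.mp hτ
  exact hammingDist_signedShear fun hpq => hne (hpq ▸ rfl)

theorem mem_shearCode {τ : Perm Point} :
    τ ∈ shearCode ↔ ∃ s e c, c ≠ 0 ∧ signedShear s e c = τ := by
  simp [shearCode]

theorem shift_signedShear (g : ShiftIndex) (s e : ZMod 2) (c : ZMod 5) :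
    shift g (signedShear s e c) = signedShear s (e + g.2.1 - g.2.2) c := by
  ext x : 1
  simp only [shift, biTranslate_apply, signedShear_apply, shiftHom, AddMonoidHom.coe_mk,
    ZeroHom.coe_mk, Prod.fst_add, Prod.snd_add, Prod.fst_neg, Prod.snd_neg, Prod.mk_add_mk,
    neg_zero, zero_add]
  ext <;> dsimp only <;> ring

theorem shift_mem_shearCode (g : ShiftIndex) {τ : Perm Point} (hτ : τ ∈ shearCode) :
    shift g τ ∈ shearCode := by
  obtain ⟨s, e, c, hc, rfl⟩ := mem_shearCode.mp hτ
  exact mem_shearCode.mpr ⟨s, _, c, hc, (shift_signedShear g s e c).symm⟩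

theorem exists_twist_signedShear_eq :
    ∀ s e, ∀ c ≠ 0, ∃ s' e' c', c' ≠ 0 ∧ twist (signedShear s' e' c') = signedShear s e c := by
  decide +kernel

theorem le_hammingDist_starter_signedShear :
    ∀ s e, ∀ c ≠ 0, 19 ≤ hammingDist starter (signedShear s e c) := by
  decide +kernel

theorem le_hammingDist_iterate_twist_of_mem_shearCode (i : ℕ) :
    ∀ τ ∈ shearCode, 19 ≤ hammingDist (twist^[i] starter) τ := by
  induction i with
  | zero =>
    intro τ hτ
    obtain ⟨s, e, c, hc, rfl⟩ := mem_shearCode.mp hτ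
    exact le_hammingDist_starter_signedShear s e c hc
  | succ i ih =>
    intro τ hτ
    obtain ⟨s, e, c, hc, rfl⟩ := mem_shearCode.mp hτ
    obtain ⟨s', e', c', hc', h⟩ := exists_twist_signedShear_eq s e c hc
    rw [← h, Function.iterate_succ_apply', hammingDist_twist]
    exact ih _ (mem_shearCode.mpr ⟨s', e', c', hc', rfl⟩)

theorem le_hammingDist_of_mem_block_of_mem_shearCode {i : Fin 4} {σ τ : Perm Point}
    (hσ : σ ∈ block i) (hτ : τ ∈ shearCode) : 19 ≤ hammingDist σ τ := by
  obtain ⟨g, -, rfl⟩ := mem_image.mp hσ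
  rw [hammingDist_shift_left]
  exact le_hammingDist_iterate_twist_of_mem_shearCode i _ (shift_mem_shearCode _ hτ)

end Shears

theorem disjoint_biUnion_block_shearCode : Disjoint (univ.biUnion block) shearCode :=
  (disjoint_biUnion_left _ _ _).mpr fun _ _ => disjoint_of_hammingDist_pos fun _ hσ _ hτ =>
    (le_hammingDist_of_mem_block_of_mem_shearCode hσ hτ).trans_lt' (by norm_num)

theorem le_hammingDist_of_mem_union {σ τ : Perm Point} (hσ : σ ∈ univ.biUnion block ∪ shearCode)
    (hτ : τ ∈ univ.biUnion block ∪ shearCode) (hne : σ ≠ τ) : 19 ≤ hammingDist σ τ := by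
  simp only [mem_union, mem_biUnion, mem_univ, true_and] at hσ hτ
  rcases hσ with ⟨i, hi⟩ | hσ <;> rcases hτ with ⟨j, hj⟩ | hτ
  · obtain rfl | hij := eq_or_ne i j
    · exact (hammingDist_of_mem_block hi hj hne).ge.trans' (by norm_num)
    · exact (hammingDist_of_mem_block_of_mem_block hij hi hj).ge
  · exact le_hammingDist_of_mem_block_of_mem_shearCode hi hτ
  · rw [hammingDist_comm]
    exact le_hammingDist_of_mem_block_of_mem_shearCode hj hσ
  · exact (hammingDist_of_mem_shearCode hσ hτ hne).ge.trans' (by norm_num)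

/-- There is a `(20,19)`-permutation code `C = C₁ ⊔ C₂` of cardinality `96`, where
`C₁` (of cardinality `80`) is a `(20,4)`-separable `(20,19)`-PA made of `4` blocks
of `20` permutations each, `C₂` has cardinality `16` with pairwise Hamming
distance `20`, and all distinct codewords of `C` have Hamming distance `≥ 19`. -/
theorem extendable_PA_20 :
    ∃ (C₁ C₂ : Finset (Equiv.Perm (Fin 20))) (L : Fin 4 → Finset (Equiv.Perm (Fin 20))),
      Disjoint C₁ C₂ ∧
      (C₁ ∪ C₂).card = 96 ∧
      C₁.card = 80 ∧
      C₂.card = 16 ∧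
      C₁ = Finset.univ.biUnion L ∧
      (∀ i, (L i).card = 20) ∧
      (∀ i j, i ≠ j → Disjoint (L i) (L j)) ∧
      (∀ i, ∀ σ ∈ L i, ∀ τ ∈ L i, σ ≠ τ → permHammingDist σ τ = 20) ∧
      (∀ i j, i ≠ j → ∀ σ ∈ L i, ∀ τ ∈ L j, permHammingDist σ τ = 19) ∧
      (∀ σ ∈ C₂, ∀ τ ∈ C₂, σ ≠ τ → permHammingDist σ τ = 20) ∧
      (∀ σ ∈ C₁ ∪ C₂, ∀ τ ∈ C₁ ∪ C₂, σ ≠ τ → 19 ≤ permHammingDist σ τ) := by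
  let φ : Perm Point ↪ Perm (Fin 20) :=
    (Fintype.equivFinOfCardEq (rfl : Fintype.card Point = 20)).permCongr.toEmbedding
  have hφ (σ τ : Perm Point) : permHammingDist (φ σ) (φ τ) = hammingDist σ τ :=
    permHammingDist_permCongr _ σ τ
  refine ⟨(univ.biUnion block).map φ, shearCode.map φ, fun i => (block i).map φ, ?_, ?_, ?_, ?_,
    ?_, ?_, ?_, ?_, ?_, ?_, ?_⟩
  · exact (disjoint_map φ).mpr disjoint_biUnion_block_shearCode
  · rw [← map_union, card_map, card_union_of_disjoint disjoint_biUnion_block_shearCode,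
      card_biUnion_block, card_shearCode]
  · rw [card_map, card_biUnion_block]
  · rw [card_map, card_shearCode]
  · simp only [map_eq_image, biUnion_image]
  · exact fun i => (card_map φ).trans (card_block i)
  · exact fun i j hij => (disjoint_map φ).mpr (disjoint_block hij)
  · simpa only [forall_mem_map, hφ, φ.apply_eq_iff_eq, ne_eq] using fun i σ hσ τ hτ =>
      hammingDist_of_mem_block hσ hτ
  · simpa only [forall_mem_map, hφ] using fun i j hij σ hσ τ hτ =>
      hammingDist_of_mem_block_of_mem_block hij hσ hτ
  · simpa only [forall_mem_map, hφ, φ.apply_eq_iff_eq, ne_eq] using fun σ hσ τ hτ =>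
      hammingDist_of_mem_shearCode hσ hτ
  · simpa only [← map_union, forall_mem_map, hφ, φ.apply_eq_iff_eq, ne_eq] using
      fun σ hσ τ hτ => le_hammingDist_of_mem_union hσ hτ
end

section
/- There exists a (56,7)-separable permutation code of length 56 and minimum distance 55; that is, there is a subset C of the symmetric group on Fin 56 of cardinality 7·56 = 392 which is the disjoint union of 7 sets of 56 permutations each, with Hamming distance 56 between distinct permutations in the same block and Hamming distance 55 between permutations in different blocks. In particular there exist 7 mutually orthogonal Latin squares of order 56. -/
/-!
Write `F = ZMod 7`, and let `K` be the field with `8` elements. Take an injective additive character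
`ψ : F → K` (the powers of a generator of `Kˣ`) and `χ x = (-1) ^ Tr x`, with values in `F`.
The matrix with rows indexed by `i : F`, columns by `(x, b) : K × F`, and entries
`(ψ i * x - ψ b, χ x * (b - i) ^ 2)` is a homogeneous difference matrix over `K × F`:

* the difference of rows `i ≠ k` is `((ψ i - ψ k) * x, χ x * (i - k) * (i + k - 2 * b))`, which is
  solved first for `x` and then for `b`;
* with `u = b - i`, row `i` is `(ψ i * (x - ψ u), χ x * u ^ 2)`. Since `-1` is not a square in `F`,
  the second coordinate determines `χ x` and `u` up to sign, and opposite signs are excluded by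
  `Tr a + Tr a⁻¹ = a + a ^ 2 + ⋯ + a ^ 6 = 1` for `a = ψ u ≠ 1`.

The translates of row `i` are the permutations of block `i`. Each block is sharply transitive, so
it gives a Latin square whose `(x, y)` entry is the codeword that maps `x` to `y`; as codewords of
different blocks agree at exactly one point, these squares are orthogonal.
-/

section HammingDistance

variable {n : ℕ} {σ τ : Equiv.Perm (Fin n)}

theorem card_filter_eq_add_permHammingDist (σ τ : Equiv.Perm (Fin n)) :
    (Finset.univ.filter fun x => σ x = τ x).card + permHammingDist σ τ = n :=
  (Finset.card_filter_add_card_filter_not _).trans (Finset.card_fin n)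

theorem permHammingDist_self (σ : Equiv.Perm (Fin n)) : permHammingDist σ σ = 0 := by
  simp [permHammingDist]

theorem permHammingDist_eq_iff_forall_ne : permHammingDist σ τ = n ↔ ∀ x, σ x ≠ τ x := by
  have hcard := card_filter_eq_add_permHammingDist σ τ
  rw [show permHammingDist σ τ = n ↔ (Finset.univ.filter fun x => σ x = τ x).card = 0 by lia,
    Finset.card_eq_zero, Finset.filter_eq_empty_iff]
  simp only [Finset.mem_univ, true_imp_iff, ne_eq]

theorem permHammingDist_add_one_eq_iff_existsUnique_eq :
    permHammingDist σ τ + 1 = n ↔ ∃! x, σ x = τ x := by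
  have hcard := card_filter_eq_add_permHammingDist σ τ
  rw [show permHammingDist σ τ + 1 = n ↔ (Finset.univ.filter fun x => σ x = τ x).card = 1 by lia,
    Finset.card_eq_one, Finset.singleton_iff_unique_mem]
  simp only [Finset.mem_filter, Finset.mem_univ, true_and]

end HammingDistance

/-- `L` is the family of blocks of an `(r, m)`-separable `(n, n - 1)`-PA, where `m` is the
cardinality of `ι`. The distance `n - 1` is expressed without truncated subtraction. -/
structure IsSeparablePA {ι : Type*} {n : ℕ} (r : ℕ) (L : ι → Finset (Equiv.Perm (Fin n))) :
    Prop where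
  card_eq : ∀ i, (L i).card = r
  disjoint : Pairwise fun i j => Disjoint (L i) (L j)
  dist_eq : ∀ i, ∀ σ ∈ L i, ∀ τ ∈ L i, σ ≠ τ → permHammingDist σ τ = n
  dist_add_one_eq : ∀ i j, i ≠ j → ∀ σ ∈ L i, ∀ τ ∈ L j, permHammingDist σ τ + 1 = n

namespace IsSeparablePA

variable {ι : Type*} {n : ℕ} {L : ι → Finset (Equiv.Perm (Fin n))}

theorem card_biUnion [Fintype ι] {r : ℕ} (hL : IsSeparablePA r L) :
    (Finset.univ.biUnion L).card = Fintype.card ι * r := by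
  rw [Finset.card_biUnion fun i _ j _ hij => hL.disjoint hij]
  simp only [hL.card_eq, Finset.sum_const, Finset.card_univ, smul_eq_mul]

theorem bijective_eval (hL : IsSeparablePA n L) (i : ι) (x : Fin n) :
    Function.Bijective fun σ : L i => σ.1 x := by
  refine (Fintype.bijective_iff_injective_and_card _).2 ⟨fun σ τ hστ => ?_, by simp [hL.card_eq]⟩
  by_contra hne
  have hdist := hL.dist_eq i σ σ.2 τ τ.2 (Subtype.coe_ne_coe.2 hne)
  exact permHammingDist_eq_iff_forall_ne.1 hdist x hστ

/-- The unique codeword of block `i` that maps `x` to `y`. -/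
noncomputable def codeword (hL : IsSeparablePA n L) (i : ι) (x : Fin n) : Fin n ≃ L i :=
  (Equiv.ofBijective _ (hL.bijective_eval i x)).symm

theorem codeword_apply (hL : IsSeparablePA n L) (i : ι) (x y : Fin n) :
    (hL.codeword i x y).1 x = y :=
  (Equiv.ofBijective _ (hL.bijective_eval i x)).apply_symm_apply y

/-- The Latin square of block `i`: its `(x, y)` entry is the index, in an arbitrary enumeration of
the block, of the codeword that maps `x` to `y`. -/
noncomputable def latinSquare (hL : IsSeparablePA n L) (i : ι) (x y : Fin n) : Fin n :=
  (L i).equivFinOfCardEq (hL.card_eq i) (hL.codeword i x y)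

theorem latinSquare_eq_iff (hL : IsSeparablePA n L) {i : ι} {x y x' y' : Fin n} :
    hL.latinSquare i x y = hL.latinSquare i x' y' ↔
      hL.codeword i x y = hL.codeword i x' y' :=
  Equiv.apply_eq_iff_eq _

theorem isLatinSquare_latinSquare (hL : IsSeparablePA n L) (i : ι) :
    IsLatinSquare (hL.latinSquare i) := by
  refine ⟨fun x => ((hL.codeword i x).trans _).bijective,
    fun y => Finite.injective_iff_bijective.1 fun x x' hxx' => ?_⟩
  have hσ : hL.codeword i x y = hL.codeword i x' y := hL.latinSquare_eq_iff.1 hxx'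
  apply (hL.codeword i x y).1.injective
  rw [hL.codeword_apply, hσ, hL.codeword_apply]

theorem isOrthogonal_latinSquare (hL : IsSeparablePA n L) {i j : ι} (hij : i ≠ j) :
    IsOrthogonal (hL.latinSquare i) (hL.latinSquare j) := by
  rintro ⟨x, y⟩ ⟨x', y'⟩ hentries
  obtain ⟨hi, hj⟩ := Prod.mk.inj hentries
  have hσ : hL.codeword i x y = hL.codeword i x' y' := hL.latinSquare_eq_iff.1 hi
  have hτ : hL.codeword j x y = hL.codeword j x' y' := hL.latinSquare_eq_iff.1 hj
  have hagree := permHammingDist_add_one_eq_iff_existsUnique_eq.1 <|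
    hL.dist_add_one_eq i j hij _ (hL.codeword i x y).2 _ (hL.codeword j x y).2
  obtain rfl : x = x' := hagree.unique
    (by rw [hL.codeword_apply, hL.codeword_apply])
    (by rw [hσ, hτ, hL.codeword_apply, hL.codeword_apply])
  rw [(hL.codeword i x).injective hσ]

end IsSeparablePA

/-- A matrix over `G` (rows `ι`, columns `X`) in which every row, and every difference of two
distinct rows, contains each element of `G` exactly once. For `X` of the size `g` of `G` and `ι` of
size `m` this is a homogeneous `(g, m; 1)`-difference matrix. -/
structure IsHomogeneousDifferenceMatrix {ι X G : Type*} [AddGroup G] (D : ι → X → G) : Prop where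
  bijective_row : ∀ i, Function.Bijective (D i)
  bijective_sub : ∀ i k, i ≠ k → Function.Bijective fun x => D i x - D k x

namespace IsHomogeneousDifferenceMatrix

variable {ι X G : Type*} [AddGroup G] {D : ι → X → G} {n : ℕ}

/-- The translate `x ↦ g + D i x` of row `i`, as a permutation of `Fin n` via numberings of the
columns and of the group. -/
noncomputable def translate (hD : IsHomogeneousDifferenceMatrix D) (eX : X ≃ Fin n)
    (eG : G ≃ Fin n) (i : ι) (g : G) : Equiv.Perm (Fin n) :=
  eX.symm.trans ((Equiv.ofBijective _ (hD.bijective_row i)).trans ((Equiv.addLeft g).trans eG))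

variable (hD : IsHomogeneousDifferenceMatrix D) (eX : X ≃ Fin n) (eG : G ≃ Fin n)

theorem translate_apply (i : ι) (g : G) (x : Fin n) :
    hD.translate eX eG i g x = eG (g + D i (eX.symm x)) :=
  rfl

theorem permHammingDist_translate_of_ne (i : ι) {g h : G} (hgh : g ≠ h) :
    permHammingDist (hD.translate eX eG i g) (hD.translate eX eG i h) = n := by
  rw [permHammingDist_eq_iff_forall_ne]
  intro x
  rwa [translate_apply, translate_apply, eG.injective.ne_iff, (add_left_injective _).ne_iff]

theorem permHammingDist_translate_add_one {i k : ι} (hik : i ≠ k) (g h : G) :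
    permHammingDist (hD.translate eX eG i g) (hD.translate eX eG k h) + 1 = n := by
  rw [permHammingDist_add_one_eq_iff_existsUnique_eq]
  have hagree (x : Fin n) : hD.translate eX eG i g x = hD.translate eX eG k h x ↔
      D i (eX.symm x) - D k (eX.symm x) = -g + h := by
    rw [translate_apply, translate_apply, eG.apply_eq_iff_eq, sub_eq_iff_eq_add, add_assoc,
      eq_neg_add_iff_add_eq]
  simp only [hagree]
  exact ((hD.bijective_sub i k hik).comp eX.symm.bijective).existsUnique _

theorem translate_injective [Nonempty X] (i : ι) :
    Function.Injective (hD.translate eX eG i) := by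
  intro g h hgh
  by_contra hne
  obtain ⟨x⟩ := ‹Nonempty X›
  exact permHammingDist_eq_iff_forall_ne.1
    (hD.permHammingDist_translate_of_ne eX eG i hne) (eX x) (by rw [hgh])

end IsHomogeneousDifferenceMatrix

theorem IsHomogeneousDifferenceMatrix.exists_isSeparablePA {ι X G : Type*} [AddGroup G]
    [Nontrivial G] {D : ι → X → G} {n : ℕ} (hD : IsHomogeneousDifferenceMatrix D)
    (eX : X ≃ Fin n) (eG : G ≃ Fin n) :
    ∃ L : ι → Finset (Equiv.Perm (Fin n)), IsSeparablePA n L := by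
  have : Fintype G := Fintype.ofEquiv _ eG.symm
  have hn : n ≠ 1 := by
    rintro rfl
    exact not_subsingleton G eG.subsingleton
  have : Nonempty X := ⟨eX.symm (eG 0)⟩
  refine ⟨fun i => Finset.univ.map ⟨_, hD.translate_injective eX eG i⟩, ?_, ?_, ?_, ?_⟩
  · simp [Fintype.card_congr eG]
  · simp only [Pairwise, Finset.disjoint_left, Finset.mem_map, Finset.mem_univ, true_and,
      Function.Embedding.coeFn_mk, not_exists]
    rintro i k hik _ ⟨g, rfl⟩ h hgh
    have hdist := hD.permHammingDist_translate_add_one eX eG hik g h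
    rw [hgh, permHammingDist_self] at hdist
    exact hn hdist.symm
  · simp only [Finset.mem_map, Finset.mem_univ, true_and, Function.Embedding.coeFn_mk]
    rintro i _ ⟨g, rfl⟩ _ ⟨h, rfl⟩ hne
    exact hD.permHammingDist_translate_of_ne eX eG i (ne_of_apply_ne _ hne)
  · simp only [Finset.mem_map, Finset.mem_univ, true_and, Function.Embedding.coeFn_mk]
    rintro i k hik _ ⟨g, rfl⟩ _ ⟨h, rfl⟩
    exact hD.permHammingDist_translate_add_one eX eG hik g h

section CharacterMatrix

variable {K F : Type*} [Field K] [Field F] (ψ : AddChar F K) (χ : AddChar K F)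

/-- The matrix over `K × F` attached to additive characters `ψ : F → K` and `χ : K → F`. Its rows
are indexed by `F` and its columns by `K × F`; for suitable `ψ` and `χ` it is a homogeneous
difference matrix. -/
def characterMatrix (i : F) (p : K × F) : K × F :=
  (ψ i * p.1 - ψ p.2, χ p.1 * (p.2 - i) ^ 2)

theorem characterMatrix_sub (i k : F) (p : K × F) :
    characterMatrix ψ χ i p - characterMatrix ψ χ k p =
      ((ψ i - ψ k) * p.1, χ p.1 * ((i - k) * (i + k - 2 * p.2))) := by
  ext <;> simp only [characterMatrix, Prod.fst_sub, Prod.snd_sub] <;> ring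

variable {ψ χ}

theorem bijective_characterMatrix_sub [Finite K] [Finite F] (hψ : Function.Injective ψ)
    (h2 : (2 : F) ≠ 0) {i k : F} (hik : i ≠ k) :
    Function.Bijective fun p => characterMatrix ψ χ i p - characterMatrix ψ χ k p := by
  refine Finite.injective_iff_bijective.1 ?_
  rintro ⟨x, b⟩ ⟨x', b'⟩ hp
  simp only [characterMatrix_sub] at hp
  obtain ⟨hfst, hsnd⟩ := Prod.mk.inj hp
  obtain rfl : x = x' := mul_left_cancel₀ (sub_ne_zero.2 (hψ.ne hik)) hfst
  have hlin : i + k - 2 * b = i + k - 2 * b' :=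
    mul_left_cancel₀ (sub_ne_zero.2 hik) (mul_left_cancel₀ (χ.val_isUnit x).ne_zero hsnd)
  rw [mul_left_cancel₀ h2 (sub_right_injective hlin)]

theorem eq_and_sq_eq_sq_of_mul_sq_eq_mul_sq (hF : ¬IsSquare (-1 : F)) {s t u v : F}
    (hs : s ^ 2 = 1) (ht : t ^ 2 = 1) (hu : u ≠ 0) (h : s * u ^ 2 = t * v ^ 2) :
    s = t ∧ u ^ 2 = v ^ 2 := by
  have hst : s = t := by
    rcases sq_eq_sq_iff_eq_or_eq_neg.1 (hs.trans ht.symm) with hst | rfl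
    · exact hst
    · have ht0 : t ≠ 0 := by rintro rfl; simp at ht
      have hneg : -u ^ 2 = v ^ 2 := mul_left_cancel₀ ht0 (by linear_combination h)
      exact absurd ⟨v / u, by field_simp; exact hneg⟩ hF
  subst hst
  have hs0 : s ≠ 0 := by rintro rfl; simp at hs
  exact ⟨rfl, mul_left_cancel₀ hs0 h⟩

theorem injective_sub_addChar_mul_sq (hF : ¬IsSquare (-1 : F)) (hχ : ∀ x, χ x ^ 2 = 1)
    (hχψ : ∀ u ≠ 0, χ (ψ u) ≠ χ (ψ (-u))) :
    Function.Injective fun p : K × F => (p.1 - ψ p.2, χ p.1 * p.2 ^ 2) := by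
  rintro ⟨x, u⟩ ⟨x', u'⟩ hp
  obtain ⟨hsub, hsq⟩ := Prod.mk.inj hp
  dsimp only at hsub hsq
  suffices u = u' by subst this; rw [sub_left_injective hsub]
  by_cases hu : u = 0
  · subst hu
    have hu' : χ x' * u' ^ 2 = 0 := by rw [← hsq]; ring
    have hsq0 : u' ^ 2 = 0 := (mul_eq_zero_iff_left (χ.val_isUnit x').ne_zero).1 hu'
    exact (sq_eq_zero_iff.1 hsq0).symm
  obtain ⟨hxx', huu'⟩ := eq_and_sq_eq_sq_of_mul_sq_eq_mul_sq hF (hχ x) (hχ x') hu hsq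
  rcases sq_eq_sq_iff_eq_or_eq_neg.1 huu'.symm with rfl | rfl
  · rfl
  · have hadd : x + ψ (-u) = x' + ψ u := by linear_combination hsub
    have hmul : χ x * χ (ψ (-u)) = χ x' * χ (ψ u) := by
      rw [← χ.map_add_eq_mul, hadd, χ.map_add_eq_mul]
    rw [hxx'] at hmul
    exact absurd (mul_left_cancel₀ (χ.val_isUnit x').ne_zero hmul).symm (hχψ u hu)

theorem bijective_characterMatrix [Finite K] [Finite F] (hF : ¬IsSquare (-1 : F))
    (hχ : ∀ x, χ x ^ 2 = 1) (hχψ : ∀ u ≠ 0, χ (ψ u) ≠ χ (ψ (-u))) (i : F) :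
    Function.Bijective (characterMatrix ψ χ i) := by
  have hfactor (x : K) (b : F) :
      characterMatrix ψ χ i (x, b) = (ψ i * (x - ψ (b - i)), χ x * (b - i) ^ 2) := by
    rw [characterMatrix, mul_sub, ← ψ.map_add_eq_mul, add_sub_cancel]
  refine Finite.injective_iff_bijective.1 ?_
  rintro ⟨x, b⟩ ⟨x', b'⟩ hp
  rw [hfactor, hfactor] at hp
  obtain ⟨hfst, hsnd⟩ := Prod.mk.inj hp
  obtain ⟨rfl, hb⟩ := Prod.mk.inj <| injective_sub_addChar_mul_sq (a₁ := (x, b - i))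
    (a₂ := (x', b' - i)) hF hχ hχψ
    (Prod.ext (mul_left_cancel₀ (ψ.val_isUnit i).ne_zero hfst) hsnd)
  rw [sub_left_injective hb]

theorem isHomogeneousDifferenceMatrix_characterMatrix [Finite K] [Finite F]
    (hF : ¬IsSquare (-1 : F)) (hψ : Function.Injective ψ) (hχ : ∀ x, χ x ^ 2 = 1)
    (hχψ : ∀ u ≠ 0, χ (ψ u) ≠ χ (ψ (-u))) :
    IsHomogeneousDifferenceMatrix (characterMatrix ψ χ) where
  bijective_row := bijective_characterMatrix hF hχ hχψ
  bijective_sub _ _ hik := by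
    have h2 : (2 : F) ≠ 0 := fun h2 => hF ⟨1, by linear_combination -h2⟩
    exact bijective_characterMatrix_sub hψ h2 hik

end CharacterMatrix

theorem exists_injective_addChar_zmod {K : Type*} [Field K] {n : ℕ} [NeZero n]
    (hK : Nat.card K = n + 1) : ∃ ψ : AddChar (ZMod n) K, Function.Injective ψ := by
  have : Finite K := Nat.finite_of_card_ne_zero (by lia)
  obtain ⟨ζ, hζ⟩ := IsCyclic.exists_ofOrder_eq_natCard (α := Kˣ)
  rw [Nat.card_units, hK, Nat.add_sub_cancel] at hζ
  have hprim : IsPrimitiveRoot (ζ : K) n :=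
    IsPrimitiveRoot.coe_units_iff.2 (hζ ▸ IsPrimitiveRoot.orderOf ζ)
  refine ⟨AddChar.zmodChar n hprim.pow_eq_one, fun a b hab => ?_⟩
  exact ZMod.val_injective n (hprim.pow_inj a.val_lt b.val_lt hab)

section TraceSign

variable {K : Type*} [Field K] [Algebra (ZMod 2) K]

theorem trace_add_trace_inv_of_card_eq_eight (hK : Nat.card K = 8) {a : K} (ha₀ : a ≠ 0)
    (ha₁ : a ≠ 1) :
    Algebra.trace (ZMod 2) K a + Algebra.trace (ZMod 2) K a⁻¹ = 1 := by
  have : Finite K := Nat.finite_of_card_ne_zero (by lia)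
  have hrank : Module.finrank (ZMod 2) K = 3 :=
    Nat.pow_right_injective le_rfl ((FiniteField.pow_finrank_eq_natCard 2 K).trans hK)
  have htrace (x : K) : algebraMap (ZMod 2) K (Algebra.trace (ZMod 2) K x) =
      x + x ^ 2 + x ^ 4 := by
    simp [FiniteField.algebraMap_trace_eq_sum_pow, hrank, Finset.sum_range_succ]
  have hpow : a ^ 7 = 1 := by
    have := Fintype.ofFinite K
    simpa [← Nat.card_eq_fintype_card, hK] using FiniteField.pow_card_sub_one_eq_one a ha₀
  have hinv : a⁻¹ = a ^ 6 := inv_eq_of_mul_eq_one_right (by rw [← pow_succ', hpow])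
  have hgeom : a ^ 6 + a ^ 5 + a ^ 4 + a ^ 3 + a ^ 2 + a + 1 = 0 :=
    mul_left_cancel₀ (sub_ne_zero.2 ha₁) (by linear_combination hpow)
  have : CharP K 2 := charP_of_injective_algebraMap (algebraMap (ZMod 2) K).injective 2
  have htwo : (2 : K) = 0 := CharTwo.two_eq_zero
  apply (algebraMap (ZMod 2) K).injective
  rw [map_add, map_one, htrace, htrace, hinv]
  linear_combination hgeom + (a ^ 5 + a ^ 17 + a ^ 10 + a ^ 3) * hpow - htwo

variable (K) in
/-- The additive character `x ↦ (-1) ^ Tr x` of a field of characteristic two, with values in an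
arbitrary ring `R`. -/
noncomputable def traceSign (R : Type*) [CommRing R] : AddChar K R :=
  (AddChar.zmodChar 2 (neg_one_sq : (-1 : R) ^ 2 = 1)).compAddMonoidHom
    (Algebra.trace (ZMod 2) K).toAddMonoidHom

variable {R : Type*} [CommRing R]

theorem traceSign_apply (x : K) :
    traceSign K R x = (-1) ^ (Algebra.trace (ZMod 2) K x).val :=
  rfl

theorem traceSign_sq (x : K) : traceSign K R x ^ 2 = 1 := by
  rw [traceSign_apply, pow_right_comm, neg_one_sq, one_pow]

theorem traceSign_mul_traceSign_inv_of_card_eq_eight (hK : Nat.card K = 8) {a : K} (ha₀ : a ≠ 0)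
    (ha₁ : a ≠ 1) : traceSign K R a * traceSign K R a⁻¹ = -1 := by
  rw [← AddChar.map_add_eq_mul, traceSign_apply, map_add,
    trace_add_trace_inv_of_card_eq_eight hK ha₀ ha₁, ZMod.val_one, pow_one]

theorem traceSign_ne_traceSign_neg_of_card_eq_eight (hK : Nat.card K = 8) (hR : (-1 : R) ≠ 1)
    {A : Type*} [AddGroup A] {ψ : AddChar A K} (hψ : Function.Injective ψ) {u : A} (hu : u ≠ 0) :
    traceSign K R (ψ u) ≠ traceSign K R (ψ (-u)) := by
  intro h
  have hψu : ψ u ≠ 1 := ψ.map_zero_eq_one ▸ hψ.ne hu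
  have hmul := traceSign_mul_traceSign_inv_of_card_eq_eight (R := R) hK
    (ψ.val_isUnit u).ne_zero hψu
  rw [← AddChar.map_neg_eq_inv, ← h, ← sq, traceSign_sq] at hmul
  exact hR hmul.symm

end TraceSign

theorem exists_isSeparablePA_seven_fiftySix :
    ∃ L : Fin 7 → Finset (Equiv.Perm (Fin 56)), IsSeparablePA 56 L := by
  have : Fact (Nat.Prime 7) := ⟨by norm_num⟩
  have hK : Nat.card (GaloisField 2 3) = 8 := GaloisField.card 2 3 three_ne_zero
  obtain ⟨ψ, hψ⟩ := exists_injective_addChar_zmod (n := 7) hK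
  have hD : IsHomogeneousDifferenceMatrix
      (characterMatrix ψ (traceSign (GaloisField 2 3) (ZMod 7))) :=
    isHomogeneousDifferenceMatrix_characterMatrix
      (by rw [ZMod.exists_sq_eq_neg_one_iff]; norm_num) hψ traceSign_sq
      fun _ hu => traceSign_ne_traceSign_neg_of_card_eq_eight hK (by decide) hψ hu
  have e : GaloisField 2 3 × ZMod 7 ≃ Fin 56 :=
    Finite.equivFinOfCardEq (by rw [Nat.card_prod, hK, Nat.card_zmod])
  exact hD.exists_isSeparablePA e e

/-- There exists a `(56,7)`-separable permutation code of length `56` and minimum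
distance `55`: a disjoint union of `7` blocks of `56` permutations each (so `392`
codewords), with within-block Hamming distance `56` and cross-block Hamming
distance `55`; in particular there exist `7` mutually orthogonal Latin squares
of order `56`. -/
theorem separable_PA_56_7_and_7MOLS_56 :
    (∃ L : Fin 7 → Finset (Equiv.Perm (Fin 56)),
      (∀ i, (L i).card = 56) ∧
      (∀ i j, i ≠ j → Disjoint (L i) (L j)) ∧
      (Finset.univ.biUnion L).card = 392 ∧
      (∀ i, ∀ σ ∈ L i, ∀ τ ∈ L i, σ ≠ τ → permHammingDist σ τ = 56) ∧
      (∀ i j, i ≠ j → ∀ σ ∈ L i, ∀ τ ∈ L j, permHammingDist σ τ = 55)) ∧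
    (∃ M : Fin 7 → (Fin 56 → Fin 56 → Fin 56),
      (∀ k, IsLatinSquare (M k)) ∧
      (∀ k k', k ≠ k' → IsOrthogonal (M k) (M k'))) := by
  obtain ⟨L, hL⟩ := exists_isSeparablePA_seven_fiftySix
  refine ⟨⟨L, hL.card_eq, fun i j hij => hL.disjoint hij, hL.card_biUnion, hL.dist_eq, ?_⟩,
    ⟨hL.latinSquare, hL.isLatinSquare_latinSquare, fun k k' => hL.isOrthogonal_latinSquare⟩⟩
  exact fun i j hij σ hσ τ hτ => Nat.succ.inj (hL.dist_add_one_eq i j hij σ hσ τ hτ)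
end
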